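/- arXiv:2308.16782 — 2 statements merged into one kernel-verified Lean document; each statement's English description precedes it below -/
import Mathlib

section
/- For every positive integer n, the polynomial h_n(x) := ∑_{k=0}^{n} x^k / ((2k+1)!·(n−k)!) has only real zeros. -/
/-!
Up to a nonzero constant, `h_n` is the odd Hermite polynomial in disguise: with the probabilists'
normalization,
`He_{2n+1}(w) = (2n+1)! (-1/2)^n · w · h_n(-2w²)` (`aeval_hermite_odd`).
Hence if `z` is a complex zero of `h_n` and `w² = -z/2`, then `w` is a zero of `He_{2n+1}`, so `w`
is real and so is `z = -2w²`.

The zeros of `He_n` are real by induction on `n` (`im_eq_zero_of_aeval_hermite`), using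
`He_{n+1} = X He_n - He_n'`: at a zero `w` of `He_{n+1}` which is not a zero of `He_n` one has
`w = He_n'(w) / He_n(w) = ∑ 1 / (w - r)` over the (real) zeros `r` of `He_n`, and the imaginary
part of the right-hand side is a nonpositive multiple of `im w`.
-/

/-- The polynomial `h_n(x) = ∑_{k=0}^{n} x^k / ((2k+1)!·(n−k)!)`. -/
noncomputable def hPoly (n : ℕ) : Polynomial ℝ :=
  ∑ k ∈ Finset.range (n + 1),
    Polynomial.C (1 / (((2 * k + 1).factorial : ℝ) * ((n - k).factorial : ℝ))) *
      Polynomial.X ^ k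

/-- The sum `∑ 1 / (w - r)` over real `r` has imaginary part a nonpositive multiple of `im w`. -/
lemma exists_im_sum_one_div_sub (w : ℂ) (s : Multiset ℂ) (hs : ∀ r ∈ s, r.im = 0) :
    ∃ T : ℝ, 0 ≤ T ∧ (s.map fun r ↦ 1 / (w - r)).sum.im = -(w.im * T) := by
  induction s using Multiset.induction_on with
  | empty => exact ⟨0, le_rfl, by simp⟩
  | cons a s ih =>
    obtain ⟨T, hT, h⟩ := ih fun r hr ↦ hs r (Multiset.mem_cons_of_mem hr)
    have ha : a.im = 0 := hs a (Multiset.mem_cons_self a s)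
    refine ⟨T + (Complex.normSq (w - a))⁻¹,
      add_nonneg hT (inv_nonneg.2 (Complex.normSq_nonneg _)), ?_⟩
    rw [Multiset.map_cons, Multiset.sum_cons, Complex.add_im, h, one_div, Complex.inv_im,
      Complex.sub_im, ha]
    ring

/-- The complex zeros of the Hermite polynomials are real. -/
lemma im_eq_zero_of_aeval_hermite (n : ℕ) :
    ∀ w : ℂ, Polynomial.aeval w (Polynomial.hermite n) = 0 → w.im = 0 := by
  induction n with
  | zero => intro w hw; simp at hw
  | succ n ih =>
    intro w hw
    by_cases h0 : Polynomial.aeval w (Polynomial.hermite n) = 0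
    · exact ih w h0
    set P : Polynomial ℂ := (Polynomial.hermite n).map (algebraMap ℤ ℂ) with hP
    have hPw : ∀ v, P.eval v = Polynomial.aeval v (Polynomial.hermite n) :=
      fun v ↦ Polynomial.eval_map_algebraMap _ _
    have hPd : P.derivative.eval w
        = Polynomial.aeval w (Polynomial.derivative (Polynomial.hermite n)) := by
      rw [hP, Polynomial.derivative_map, Polynomial.eval_map_algebraMap]
    have h0' : P.eval w ≠ 0 := by rwa [hPw]
    have hsum := (IsAlgClosed.splits P).eval_derivative_div_eval_of_ne_zero h0'
    rw [Polynomial.hermite_succ, map_sub, map_mul, Polynomial.aeval_X, ← hPw, ← hPd,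
      sub_eq_zero] at hw
    rw [← hw, mul_div_cancel_right₀ _ h0'] at hsum
    obtain ⟨T, hT, h⟩ := exists_im_sum_one_div_sub w P.roots fun r hr ↦
      ih r (by rw [← hPw]; exact (Polynomial.mem_roots'.1 hr).2)
    rw [← hsum] at h
    have h2 : w.im * (1 + T) = 0 := by linarith
    exact (mul_eq_zero.1 h2).resolve_right (by positivity)

lemma sum_range_two_mul_eq (f : ℕ → ℂ) (m : ℕ) :
    ∑ i ∈ Finset.range (2 * m), f i = ∑ i ∈ Finset.range m, (f (2 * i) + f (2 * i + 1)) := by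
  induction m with
  | zero => simp
  | succ m ih =>
    rw [Nat.mul_succ, Finset.sum_range_succ, Finset.sum_range_succ, Finset.sum_range_succ, ih,
      add_assoc]

lemma doubleFactorial_pred_mul (m : ℕ) :
    (2 * m - 1).doubleFactorial * (2 ^ m * m.factorial) = (2 * m).factorial := by
  cases m with
  | zero => simp
  | succ m =>
    rw [← Nat.doubleFactorial_two_mul, show 2 * (m + 1) = (2 * m + 1) + 1 by ring,
      Nat.factorial_eq_mul_doubleFactorial, mul_comm, Nat.add_sub_cancel]

lemma aeval_hPoly (n : ℕ) (z : ℂ) :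
    Polynomial.aeval z (hPoly n) = ∑ k ∈ Finset.range (n + 1),
      1 / (((2 * k + 1).factorial : ℂ) * ((n - k).factorial : ℂ)) * z ^ k := by
  simp [hPoly]

/-- `He_{2n+1}(w) = (2n+1)! (-1/2)^n · w · h_n(-2w²)`. -/
lemma aeval_hermite_odd (n : ℕ) (w : ℂ) :
    Polynomial.aeval w (Polynomial.hermite (2 * n + 1))
      = (2 * n + 1).factorial * (-1 / 2) ^ n * w * Polynomial.aeval (-2 * w ^ 2) (hPoly n) := by
  rw [Polynomial.aeval_eq_sum_range, Polynomial.natDegree_hermite,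
    show 2 * n + 1 + 1 = 2 * (n + 1) by ring, sum_range_two_mul_eq, aeval_hPoly, Finset.mul_sum]
  refine Finset.sum_congr rfl fun k hk ↦ ?_
  obtain ⟨m, rfl⟩ := Nat.exists_eq_add_of_le' (Nat.lt_succ_iff.1 (Finset.mem_range.1 hk))
  rw [Polynomial.coeff_hermite_of_odd_add (n := 2 * (m + k) + 1) (k := 2 * k) (by grind),
    show 2 * (m + k) + 1 = 2 * m + (2 * k + 1) by ring, Polynomial.coeff_hermite_explicit,
    Nat.add_sub_cancel, zero_smul, zero_add, zsmul_eq_mul]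
  have hd : ((2 * m - 1).doubleFactorial : ℂ) * (2 ^ m * m.factorial) = (2 * m).factorial := by
    exact_mod_cast doubleFactorial_pred_mul m
  have hc : (((2 * m + (2 * k + 1)).choose (2 * k + 1) : ℕ) : ℂ)
      * ((2 * m).factorial * (2 * k + 1).factorial) = (2 * m + (2 * k + 1)).factorial := by
    have := Nat.add_choose_mul_factorial_mul_factorial (2 * m) (2 * k + 1)
    rw [mul_assoc] at this
    exact_mod_cast this
  have h1 : ((2 * k + 1).factorial : ℂ) ≠ 0 := by exact_mod_cast Nat.factorial_ne_zero _
  have h2 : (m.factorial : ℂ) ≠ 0 := by exact_mod_cast Nat.factorial_ne_zero _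
  have h3 : (-1 / 2 : ℂ) ^ (m + k) * (-2 * w ^ 2) ^ k = (-1) ^ m / 2 ^ m * w ^ (2 * k) := by
    rw [pow_add, mul_assoc, ← mul_pow, div_pow, pow_mul]
    congr 2
    ring
  rw [← hc, ← hd]
  push_cast
  calc _ = (-1 : ℂ) ^ m * (2 * m - 1).doubleFactorial
        * (2 * m + (2 * k + 1)).choose (2 * k + 1) * (w ^ (2 * k) * w) := by rw [pow_succ w]
    _ = ((2 * m + (2 * k + 1)).choose (2 * k + 1) * ((2 * m - 1).doubleFactorial
        * (2 ^ m * m.factorial) * (2 * k + 1).factorial)) * w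
        * (1 / ((2 * k + 1).factorial * m.factorial))
        * ((-1) ^ m / 2 ^ m * w ^ (2 * k)) := by field_simp
    _ = _ := by rw [← h3]; ring

/-- For every positive integer `n`, the polynomial `h_n` has only real zeros. -/
theorem hPoly_real_rooted (n : ℕ) (hn : 0 < n) :
    ∀ z ∈ ((hPoly n).map (algebraMap ℝ ℂ)).roots, z.im = 0 := by
  intro z hz
  have hz0 : Polynomial.aeval z (hPoly n) = 0 := by
    rw [← Polynomial.eval_map_algebraMap]
    exact (Polynomial.mem_roots'.1 hz).2
  obtain ⟨w, hw⟩ := IsAlgClosed.exists_pow_nat_eq (-z / 2) (n := 2) (by norm_num)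
  have hzw : z = -2 * w ^ 2 := by rw [hw]; ring
  have him := im_eq_zero_of_aeval_hermite (2 * n + 1) w
    (by rw [aeval_hermite_odd, ← hzw, hz0, mul_zero])
  rw [hzw]
  simp [pow_two, him]
end

section
/- For every positive integer n, the polynomial g_n(x) := ∑_{k=0}^{n} C(n,k) · (k · k!/(2k+1)!) · x^k has only real zeros; moreover g_n(x) = n! · x · h_n'(x), where h_n(x) := ∑_{k=0}^{n} x^k/((2k+1)!·(n−k)!). -/
/-- The polynomial `g_n(x) = ∑_{k=0}^{n} C(n,k)·(k·k!/(2k+1)!)·x^k`. -/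
noncomputable def gPoly (n : ℕ) : Polynomial ℝ :=
  ∑ k ∈ Finset.range (n + 1),
    Polynomial.C ((Nat.choose n k : ℝ) * ((k : ℝ) * (k.factorial : ℝ) /
      ((2 * k + 1).factorial : ℝ))) * Polynomial.X ^ k

open Polynomial in
/-- If all roots of `f` are real, then `Im z` and `Im (f'(z) / f(z))` never have the same strict
sign: each summand `1 / (z - r)` of the logarithmic derivative has imaginary part
`-Im z / |z - r|²`. -/
lemma im_mul_im_logDeriv_nonpos (f : ℂ[X]) (hf : ∀ r ∈ f.roots, r.im = 0) (z : ℂ)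
    (hz : f.eval z ≠ 0) : z.im * (f.derivative.eval z / f.eval z).im ≤ 0 := by
  rw [(IsAlgClosed.splits f).eval_derivative_div_eval_of_ne_zero hz]
  have key : ∀ s : Multiset ℂ, (∀ r ∈ s, r.im = 0) →
      z.im * (s.map fun r => 1 / (z - r)).sum.im ≤ 0 := by
    intro s
    induction s using Multiset.induction_on with
    | empty => simp
    | cons a s ih =>
      intro h
      have ha : a.im = 0 := h a (Multiset.mem_cons_self a s)
      have hs := ih fun r hr => h r (Multiset.mem_cons_of_mem hr)
      have h1 : z.im * (1 / (z - a)).im ≤ 0 := by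
        rw [one_div, Complex.inv_im, Complex.sub_im, ha, sub_zero, mul_div_assoc', mul_neg]
        exact div_nonpos_of_nonpos_of_nonneg (neg_nonpos.mpr (mul_self_nonneg _))
          (Complex.normSq_nonneg _)
      rw [Multiset.map_cons, Multiset.sum_cons, Complex.add_im, mul_add]
      exact add_nonpos h1 hs
  exact key _ hf

open Polynomial in
lemma hermite_root_im (m : ℕ) :
    ∀ z : ℂ, ((hermite m).map (Int.castRingHom ℂ)).eval z = 0 → z.im = 0 := by
  induction m with
  | zero => simp
  | succ m ih =>
    intro z hz
    by_cases h0 : ((hermite m).map (Int.castRingHom ℂ)).eval z = 0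
    · exact ih z h0
    · have hrec : z = ((hermite m).map (Int.castRingHom ℂ)).derivative.eval z /
          ((hermite m).map (Int.castRingHom ℂ)).eval z := by
        rw [eq_div_iff h0, ← sub_eq_zero, ← hz]
        simp [derivative_map]
      have h := im_mul_im_logDeriv_nonpos _
        (fun r hr => ih r (isRoot_of_mem_roots hr)) z h0
      rw [← hrec] at h
      exact mul_self_eq_zero.mp (le_antisymm h (mul_self_nonneg _))

lemma sum_range_two_mul_split (f : ℕ → ℂ) (n : ℕ) :
    ∑ i ∈ Finset.range (2 * n), f i = ∑ k ∈ Finset.range n, (f (2 * k) + f (2 * k + 1)) := by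
  induction n with
  | zero => simp
  | succ n ih =>
    rw [Finset.sum_range_succ, ← ih, Nat.mul_succ, Finset.sum_range_succ, Finset.sum_range_succ]
    ring

open Polynomial in
/-- With `j = n - k`, this is the explicit coefficient
`(-1)^j (2j-1)‼ C(2n+1, 2k+1)` rewritten by `(2j)! = 2^j j! (2j-1)‼`. -/
lemma coeff_hermite_odd_odd (n k : ℕ) (hk : k ≤ n) :
    (((hermite (2 * n + 1)).coeff (2 * k + 1) : ℤ) : ℂ) =
      (2 * n + 1).factorial * (-1 / 2) ^ n *
        ((-2) ^ k / ((2 * k + 1).factorial * (n - k).factorial)) := by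
  obtain ⟨j, rfl⟩ := Nat.exists_eq_add_of_le hk
  have hc : ((2 * (k + j) + 1).choose (2 * k + 1) : ℂ) * (2 * k + 1).factorial *
      (2 * j).factorial = (2 * (k + j) + 1).factorial := by
    have := Nat.choose_mul_factorial_mul_factorial
      (show 2 * k + 1 ≤ 2 * (k + j) + 1 by omega)
    rw [show 2 * (k + j) + 1 - (2 * k + 1) = 2 * j by omega] at this
    exact_mod_cast this
  have hd : ((2 * j).factorial : ℂ) = 2 ^ j * j.factorial * (2 * j - 1).doubleFactorial := by
    cases j with
    | zero => simp
    | succ j =>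
      have := Nat.factorial_eq_mul_doubleFactorial (2 * j + 1)
      rw [show 2 * j + 1 + 1 = 2 * (j + 1) by ring, Nat.doubleFactorial_two_mul] at this
      rw [show 2 * (j + 1) - 1 = 2 * j + 1 by omega]
      exact_mod_cast this
  rw [show 2 * (k + j) + 1 = 2 * j + (2 * k + 1) by ring, coeff_hermite_explicit,
    show 2 * j + (2 * k + 1) = 2 * (k + j) + 1 by ring, ← hc, hd, Nat.add_sub_cancel_left]
  have h1 : ((2 * k + 1).factorial : ℂ) ≠ 0 := by exact_mod_cast Nat.factorial_ne_zero _
  have h2 : (j.factorial : ℂ) ≠ 0 := by exact_mod_cast Nat.factorial_ne_zero _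
  have h3 : (-1 / 2 : ℂ) ^ k * (-2) ^ k = 1 := by rw [← mul_pow]; norm_num
  have h4 : (-1 / 2 : ℂ) ^ j * 2 ^ j = (-1) ^ j := by rw [← mul_pow]; norm_num
  push_cast
  rw [pow_add, ← h4]
  field_simp
  linear_combination (-((2 * j - 1).doubleFactorial * (2 * (k + j) + 1).choose (2 * k + 1) : ℂ)) * h3

open Polynomial in
/-- The quadratic transformation between odd Hermite polynomials and `h_n`. -/
lemma eval_hermite_odd (n : ℕ) (y : ℂ) :
    ((hermite (2 * n + 1)).map (Int.castRingHom ℂ)).eval y =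
      (2 * n + 1).factorial * (-1 / 2) ^ n * y *
        ((hPoly n).map (algebraMap ℝ ℂ)).eval (-2 * y ^ 2) := by
  have hdeg : ((hermite (2 * n + 1)).map (Int.castRingHom ℂ)).natDegree < 2 * (n + 1) := by
    refine lt_of_le_of_lt natDegree_map_le ?_
    rw [natDegree_hermite]
    omega
  rw [eval_eq_sum_range' hdeg, sum_range_two_mul_split]
  simp only [hPoly, Polynomial.map_sum, eval_finsetSum, Finset.mul_sum]
  refine Finset.sum_congr rfl fun k hk => ?_
  have hk' : k ≤ n := Nat.lt_succ_iff.mp (Finset.mem_range.mp hk)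
  have heven : (hermite (2 * n + 1)).coeff (2 * k) = 0 :=
    coeff_hermite_of_odd_add ⟨n + k, by ring⟩
  rw [coeff_map, coeff_map, heven, eq_intCast, eq_intCast, coeff_hermite_odd_odd n k hk']
  simp
  ring

open Polynomial in
lemma hPoly_root_im (n : ℕ) (z : ℂ) (hz : ((hPoly n).map (algebraMap ℝ ℂ)).eval z = 0) :
    z.im = 0 := by
  obtain ⟨y, hy⟩ := IsAlgClosed.exists_pow_nat_eq (-z / 2) (n := 2) two_pos
  have hzy : z = -2 * y ^ 2 := by rw [hy]; ring
  have hyim : y.im = 0 := by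
    apply hermite_root_im (2 * n + 1) y
    rw [eval_hermite_odd, ← hzy, hz, mul_zero]
  rw [hzy]
  simp [pow_two, hyim]

open Polynomial in
lemma derivative_hPoly_root_im (n : ℕ) (z : ℂ)
    (h0 : ((hPoly n).map (algebraMap ℝ ℂ)).derivative ≠ 0)
    (hz : ((hPoly n).map (algebraMap ℝ ℂ)).derivative.eval z = 0) : z.im = 0 := by
  set P := (hPoly n).map (algebraMap ℝ ℂ) with hP
  have hdeg : 0 < P.degree := by
    by_contra h
    rw [eq_C_of_degree_le_zero (not_lt.mp h), derivative_C] at h0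
    exact h0 rfl
  have hmem : z ∈ convexHull ℝ (P.rootSet ℂ) := by
    apply rootSet_derivative_subset_convexHull_rootSet hdeg
    rw [mem_rootSet, coe_aeval_eq_eval]
    exact ⟨h0, hz⟩
  have hconv : Convex ℝ {w : ℂ | w.im = 0} := by
    intro a ha b hb s t _ _ _
    have ha' : a.im = 0 := ha
    have hb' : b.im = 0 := hb
    simp [ha', hb']
  refine convexHull_min (fun w hw => ?_) hconv hmem
  rw [mem_rootSet, coe_aeval_eq_eval] at hw
  exact hPoly_root_im n w hw.2

open Polynomial in
lemma gPoly_eq (n : ℕ) :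
    gPoly n = C ((n.factorial : ℝ)) * X * derivative (hPoly n) := by
  rw [gPoly, hPoly, derivative_sum, Finset.mul_sum]
  refine Finset.sum_congr rfl fun k hk => ?_
  have hk' : k ≤ n := Nat.lt_succ_iff.mp (Finset.mem_range.mp hk)
  rw [derivative_C_mul_X_pow]
  cases k with
  | zero => simp
  | succ k =>
    have hc : (n.choose (k + 1) : ℝ) * (k + 1).factorial * (n - (k + 1)).factorial =
        n.factorial := by
      exact_mod_cast Nat.choose_mul_factorial_mul_factorial hk'
    have h1 : ((2 * (k + 1) + 1).factorial : ℝ) ≠ 0 := by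
      exact_mod_cast Nat.factorial_ne_zero _
    have h2 : ((n - (k + 1)).factorial : ℝ) ≠ 0 := by
      exact_mod_cast Nat.factorial_ne_zero _
    rw [Nat.add_sub_cancel, pow_succ' X k, mul_mul_mul_comm, ← C_mul, ← hc]
    congr 2
    field_simp

/-- For every positive integer `n`, `g_n` has only real zeros; moreover
`g_n(x) = n!·x·h_n'(x)`. -/
theorem gPoly_real_rooted (n : ℕ) (hn : 0 < n) :
    (∀ z ∈ ((gPoly n).map (algebraMap ℝ ℂ)).roots, z.im = 0) ∧
    gPoly n = Polynomial.C ((n.factorial : ℝ)) * Polynomial.X *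
      Polynomial.derivative (hPoly n) := by
  refine ⟨fun z hz => ?_, gPoly_eq n⟩
  rw [gPoly_eq, Polynomial.mem_roots', Polynomial.IsRoot.def, Polynomial.map_mul,
    Polynomial.eval_mul, ← Polynomial.derivative_map] at hz
  obtain ⟨hne, h⟩ := hz
  rcases mul_eq_zero.mp h with h | h
  · have hn0 : (n.factorial : ℂ) ≠ 0 := by exact_mod_cast Nat.factorial_ne_zero _
    have : z = 0 := by simpa [hn0] using h
    simp [this]
  · exact derivative_hPoly_root_im n z (right_ne_zero_of_mul hne) h
end
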